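/- arXiv:math/0603070 — 3 statements merged into one kernel-verified Lean document; each statement's English description precedes it below -/
import Mathlib

section
/- For all integers m ≥ 0 and l ∈ ℤ, one has S_{m,−l}(q) = S_{m,l}(q) and S̃_{m,−l}(q) = q^{l} · S̃_{m,l}(q), identities in ℤ[q, q⁻¹]. -/
open LaurentPolynomial

/-- The Gaussian (q-)binomial coefficient `C(n,k)_q` as a Laurent polynomial in `q`,
defined by the q-Pascal recursion `C(n+1,k+1)_q = C(n,k)_q + q^(k+1) C(n,k+1)_q`. -/
noncomputable def qbinom : ℕ → ℕ → LaurentPolynomial ℤ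
  | _, 0 => 1
  | 0, _ + 1 => 0
  | n + 1, k + 1 => qbinom n k + T ((k : ℤ) + 1) * qbinom n (k + 1)

/-- `C(n,k)_q` for integer arguments, zero unless `0 ≤ k ≤ n`. -/
noncomputable def qbinomZ (n k : ℤ) : LaurentPolynomial ℤ :=
  if 0 ≤ k ∧ k ≤ n then qbinom n.toNat k.toNat else 0

/-- `S_{m,l}(q) = Σ_{ν∈ℤ} q^{(ν+l−m)(ν+l)+ν(ν−m)} C(m,ν)_q C(ν, m−l−ν)_q`. -/
noncomputable def Sq (m : ℕ) (l : ℤ) : LaurentPolynomial ℤ :=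
  ∑ᶠ ν : ℤ,
    T ((ν + l - m) * (ν + l) + ν * (ν - m)) * (qbinomZ m ν * qbinomZ ν (m - l - ν))

/-- `S̃_{m,l}(q) = Σ_{ν∈ℤ} q^{(ν+l−m)(ν+l−1)+ν(ν−m)} C(m,ν)_q C(ν, m−l−ν)_q`. -/
noncomputable def Sqt (m : ℕ) (l : ℤ) : LaurentPolynomial ℤ :=
  ∑ᶠ ν : ℤ,
    T ((ν + l - m) * (ν + l - 1) + ν * (ν - m)) * (qbinomZ m ν * qbinomZ ν (m - l - ν))

/-!
Put `a = m - ν`, `b = m - l - ν` and `c = m - a - b`. Then `C(m,ν)_q C(ν,m-l-ν)_q` is the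
`q`-multinomial coefficient with parts `a, b, c`, hence symmetric in `a` and `b`, and `a - b = l`.
The exponent of `q` is `-a(m-a) - b(m-b)` in `S_{m,l}`, which is symmetric as well, and exceeds this
by `b` in `S̃_{m,l}`. So the substitution `ν ↦ ν + l`, which exchanges `a` and `b`, matches the sums
for `-l` and `l` term by term, up to the factor `q^(a-b) = q^l` for `S̃`.
-/

/-- The `q`-Pochhammer symbol `(q;q)_n = (1 - q)(1 - q²)⋯(1 - qⁿ)`, which stands in for the
`q`-factorial: it equals `(1 - q)ⁿ [n]_q!`, and the powers of `1 - q` cancel in the factorial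
formula for Gaussian binomials. -/
noncomputable def qPochhammer (n : ℕ) : LaurentPolynomial ℤ :=
  ∏ i ∈ Finset.range n, (1 - T ((i : ℤ) + 1))

lemma qPochhammer_zero : qPochhammer 0 = 1 :=
  Finset.prod_range_zero _

lemma qPochhammer_succ (n : ℕ) :
    qPochhammer (n + 1) = qPochhammer n * (1 - T ((n : ℤ) + 1)) :=
  Finset.prod_range_succ _ _

lemma T_injective (R : Type*) [Semiring R] [Nontrivial R] :
    Function.Injective (T : ℤ → LaurentPolynomial R) :=
  AddMonoidAlgebra.single_left_injective one_ne_zero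

lemma qPochhammer_ne_zero (n : ℕ) : qPochhammer n ≠ 0 := by
  refine Finset.prod_ne_zero_iff.mpr fun i _ => sub_ne_zero.mpr ?_
  rw [← T_zero]
  exact (T_injective ℤ).ne (by omega)

lemma qbinom_zero_right (n : ℕ) : qbinom n 0 = 1 := by
  cases n <;> rw [qbinom]

lemma qbinom_succ_succ (n k : ℕ) :
    qbinom (n + 1) (k + 1) = qbinom n k + T ((k : ℤ) + 1) * qbinom n (k + 1) := by
  rw [qbinom]

lemma qbinom_eq_zero_of_lt : ∀ {n k : ℕ}, n < k → qbinom n k = 0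
  | 0, k + 1, _ => by rw [qbinom]
  | n + 1, k + 1, h => by
    rw [qbinom_succ_succ, qbinom_eq_zero_of_lt (Nat.lt_of_succ_lt_succ h),
      qbinom_eq_zero_of_lt (Nat.lt_of_succ_lt h), mul_zero, add_zero]

lemma qbinom_self (n : ℕ) : qbinom n n = 1 := by
  induction n with
  | zero => exact qbinom_zero_right 0
  | succ n ih =>
    rw [qbinom_succ_succ, ih, qbinom_eq_zero_of_lt n.lt_succ_self, mul_zero, add_zero]

lemma qbinom_add_mul_qPochhammer_mul_qPochhammer :
    ∀ k j : ℕ, qbinom (k + j) k * (qPochhammer k * qPochhammer j) = qPochhammer (k + j)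
  | 0, j => by rw [qbinom_zero_right, qPochhammer_zero, zero_add, one_mul, one_mul]
  | k + 1, 0 => by rw [add_zero, qbinom_self, qPochhammer_zero, mul_one, one_mul]
  | k + 1, j + 1 => by
    have hk := qbinom_add_mul_qPochhammer_mul_qPochhammer k (j + 1)
    have hj := qbinom_add_mul_qPochhammer_mul_qPochhammer (k + 1) j
    have hT : (T (((k + j + 1 : ℕ) : ℤ) + 1) : LaurentPolynomial ℤ)
        = T ((k : ℤ) + 1) * T ((j : ℤ) + 1) := by
      rw [← T_add]
      congr 1
      push_cast
      ring
    rw [← add_assoc] at hk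
    rw [add_right_comm] at hj
    rw [show k + 1 + (j + 1) = k + j + 1 + 1 by ring, qbinom_succ_succ,
      qPochhammer_succ (k + j + 1), hT]
    rw [qPochhammer_succ j] at hk ⊢
    rw [qPochhammer_succ k] at hj ⊢
    -- `1 - q^(k+j+2) = (1 - q^(k+1)) + q^(k+1) (1 - q^(j+1))`
    linear_combination (1 - T ((k : ℤ) + 1)) * hk
      + T ((k : ℤ) + 1) * (1 - T ((j : ℤ) + 1)) * hj

lemma qbinom_mul_qbinom_mul_qPochhammer (a b c : ℕ) :
    qbinom (b + c + a) (b + c) * qbinom (b + c) b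
        * (qPochhammer a * qPochhammer b * qPochhammer c)
      = qPochhammer (b + c + a) := by
  have outer := qbinom_add_mul_qPochhammer_mul_qPochhammer (b + c) a
  have inner := qbinom_add_mul_qPochhammer_mul_qPochhammer b c
  linear_combination outer + qbinom (b + c + a) (b + c) * qPochhammer a * inner

lemma qbinom_mul_qbinom_comm (a b c : ℕ) :
    qbinom (b + c + a) (b + c) * qbinom (b + c) b
      = qbinom (a + c + b) (a + c) * qbinom (a + c) a := by
  have hne : qPochhammer a * qPochhammer b * qPochhammer c ≠ 0 :=
    mul_ne_zero (mul_ne_zero (qPochhammer_ne_zero a) (qPochhammer_ne_zero b))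
      (qPochhammer_ne_zero c)
  refine mul_right_cancel₀ hne ?_
  calc qbinom (b + c + a) (b + c) * qbinom (b + c) b
        * (qPochhammer a * qPochhammer b * qPochhammer c)
      = qPochhammer (b + c + a) := qbinom_mul_qbinom_mul_qPochhammer a b c
    _ = qPochhammer (a + c + b) := by congr 1; ring
    _ = qbinom (a + c + b) (a + c) * qbinom (a + c) a
        * (qPochhammer b * qPochhammer a * qPochhammer c) :=
      (qbinom_mul_qbinom_mul_qPochhammer b a c).symm
    _ = qbinom (a + c + b) (a + c) * qbinom (a + c) a
        * (qPochhammer a * qPochhammer b * qPochhammer c) := by rw [mul_comm (qPochhammer b)]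

lemma qbinomZ_natCast (n k : ℕ) : qbinomZ n k = qbinom n k := by
  rcases le_or_gt k n with h | h
  · simp [qbinomZ, h]
  · simp [qbinomZ, h.not_ge, qbinom_eq_zero_of_lt h]

lemma qbinomZ_eq_zero {n k : ℤ} (h : ¬(0 ≤ k ∧ k ≤ n)) : qbinomZ n k = 0 :=
  if_neg h

lemma qbinomZ_mul_qbinomZ_eq_zero {m a b : ℤ} (h : ¬(0 ≤ a ∧ 0 ≤ b ∧ a + b ≤ m)) :
    qbinomZ m (m - a) * qbinomZ (m - a) b = 0 := by
  by_cases ha : 0 ≤ a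
  · rw [qbinomZ_eq_zero (n := m - a) (by omega), mul_zero]
  · rw [qbinomZ_eq_zero (by omega), zero_mul]

lemma qbinomZ_mul_qbinomZ_comm (m a b : ℤ) :
    qbinomZ m (m - a) * qbinomZ (m - a) b = qbinomZ m (m - b) * qbinomZ (m - b) a := by
  by_cases h : 0 ≤ a ∧ 0 ≤ b ∧ a + b ≤ m
  · obtain ⟨ha, hb, hab⟩ := h
    obtain ⟨c, rfl⟩ : ∃ c, m = a + b + c := ⟨m - (a + b), by ring⟩
    have hc : 0 ≤ c := by omega
    lift a to ℕ using ha
    lift b to ℕ using hb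
    lift c to ℕ using hc
    have hbc : (a + b + c - a : ℤ) = (b + c : ℕ) := by push_cast; ring
    have hac : (a + b + c - b : ℤ) = (a + c : ℕ) := by push_cast; ring
    have hm : (a + b + c : ℤ) = (b + c + a : ℕ) := by push_cast; ring
    have hm' : b + c + a = a + c + b := by ring
    rw [hbc, hac, hm]
    simp only [qbinomZ_natCast]
    rw [qbinom_mul_qbinom_comm, hm']
  · rw [qbinomZ_mul_qbinomZ_eq_zero h, qbinomZ_mul_qbinomZ_eq_zero (by omega)]

lemma finsum_T_mul_qbinomZ_mul_qbinomZ_neg (m l d : ℤ) {e e' : ℤ → ℤ}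
    (he : ∀ ν, e' (ν + l) = d + e ν) :
    ∑ᶠ ν : ℤ, T (e' ν) * (qbinomZ m ν * qbinomZ ν (m - -l - ν))
      = T d * ∑ᶠ ν : ℤ, T (e ν) * (qbinomZ m ν * qbinomZ ν (m - l - ν)) := by
  rw [mul_finsum, ← finsum_comp_equiv (Equiv.addRight l)]
  refine finsum_congr fun ν => ?_
  have hcomm : qbinomZ m (ν + l) * qbinomZ (ν + l) (m - -l - (ν + l))
      = qbinomZ m ν * qbinomZ ν (m - l - ν) := by
    convert qbinomZ_mul_qbinomZ_comm m (m - l - ν) (m - ν) using 3 <;> ring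
  rw [Equiv.coe_addRight, hcomm, he, T_add, mul_assoc]

/-- S_{m,-l}(q) = S_{m,l}(q) and St_{m,-l}(q) = q^l * St_{m,l}(q), in Z[q,q^-1]. -/
theorem S_neg_and_St_neg (m : ℕ) (l : ℤ) :
    Sq m (-l) = Sq m l ∧ Sqt m (-l) = T l * Sqt m l := by
  constructor
  · calc Sq m (-l) = T 0 * Sq m l :=
          finsum_T_mul_qbinomZ_mul_qbinomZ_neg m l 0 fun ν => by ring
      _ = Sq m l := by rw [T_zero, one_mul]
  · exact finsum_T_mul_qbinomZ_mul_qbinomZ_neg m l l fun ν => by ring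
end

section
/- Let p, p' be relatively prime integers with 3 ≤ p < p', and suppose 3/2 < p'/p < 2. Then there is no integer s ≥ 1 with τ(s) = 2 and τ(s+1) = 2, where τ(b) = ⌊(b+1)p/p'⌋ − ⌊(b−1)p/p'⌋. -/
/-!
Put `α = p / p'`, so that `τ(b)` is the growth of `⌊xα⌋` from `x = b - 1` to `x = b + 1`. In
`τ(s) + τ(s + 1)` the two windows overlap: the sum is the growth from `s - 1` to `s + 2` plus the
growth from `s` to `s + 1`. A step of length `k` raises `⌊xα⌋` by at most `⌈kα⌉`, so the sum is at
most `⌈3α⌉ + ⌈α⌉`, which is at most `2 + 1` as soon as `α ≤ 2 / 3`.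
-/

/-- `τ(b) = ⌊(b+1)p/p'⌋ − ⌊(b−1)p/p'⌋`. -/
noncomputable def tau (p p' b : ℤ) : ℤ :=
  ⌊(((b + 1) * p : ℤ) : ℚ) / (p' : ℚ)⌋ - ⌊(((b - 1) * p : ℤ) : ℚ) / (p' : ℚ)⌋

theorem floor_add_le_floor_add_ceil {R : Type*} [Ring R] [LinearOrder R] [IsOrderedRing R]
    [FloorRing R] (x y : R) : ⌊x + y⌋ ≤ ⌊x⌋ + ⌈y⌉ := by
  rw [← Int.floor_add_intCast]
  gcongr
  exact Int.le_ceil y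

theorem tau_add_tau_succ_le (p p' s : ℤ) :
    tau p p' s + tau p p' (s + 1) ≤ ⌈(3 * (p / p') : ℚ)⌉ + ⌈(p / p' : ℚ)⌉ := by
  set α : ℚ := p / p' with hα
  have hτ (b : ℤ) : tau p p' b = ⌊(b + 1) * α⌋ - ⌊(b - 1) * α⌋ := by
    simp [tau, hα, mul_div_assoc]
  have overlap_growth : ⌊(s + 1) * α⌋ ≤ ⌊s * α⌋ + ⌈α⌉ := by
    convert floor_add_le_floor_add_ceil (s * α) α using 2
    ring
  have union_growth : ⌊(s + 1 + 1) * α⌋ ≤ ⌊(s - 1) * α⌋ + ⌈3 * α⌉ := by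
    convert floor_add_le_floor_add_ceil ((s - 1) * α) (3 * α) using 2
    ring
  rw [hτ, hτ, Int.cast_add, Int.cast_one, add_sub_cancel_right]
  linarith

theorem no_adjacent_tau_two_general {p p' : ℤ} (hp' : 0 < p') (h : 3 * p ≤ 2 * p') (s : ℤ) :
    tau p p' s + tau p p' (s + 1) ≤ 3 := by
  have hα : (3 * (p / p') : ℚ) ≤ 2 := by
    rw [← mul_div_assoc, div_le_iff₀ (by exact_mod_cast hp')]
    exact_mod_cast h
  have ceil_α : ⌈(p / p' : ℚ)⌉ ≤ 1 := Int.ceil_le.mpr (by push_cast; linarith)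
  have ceil_three_α : ⌈(3 * (p / p') : ℚ)⌉ ≤ 2 := Int.ceil_le.mpr (mod_cast hα)
  linarith [tau_add_tau_succ_le p p' s]

/-- if `p, p'` are relatively prime, `3 ≤ p < p'` and `3/2 < p'/p < 2`, then
there is no integer `s ≥ 1` with `τ(s) = 2` and `τ(s+1) = 2`. -/
theorem no_adjacent_tau_two (p p' : ℤ) (hcop : Int.gcd p p' = 1) (hp : 3 ≤ p) (h1 : p < p')
    (h32 : 3 * p < 2 * p') (h2 : p' < 2 * p) :
    ¬ ∃ s : ℤ, 1 ≤ s ∧ tau p p' s = 2 ∧ tau p p' (s + 1) = 2 := by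
  rintro ⟨s, -, hs, hs'⟩
  linarith [no_adjacent_tau_two_general (by linarith) h32.le s]
end

section
/- Let p, p' be relatively prime integers with 3 ≤ p < p' < 2p, and set τ(b) = ⌊(b+1)p/p'⌋ − ⌊(b−1)p/p'⌋. Suppose integers s ≥ 1 and k ≥ 0 satisfy τ(s) = 2, τ(s+i) = 1 for all i = 1, …, k, and τ(s+k+1) = 2. Then k is even. -/
lemma add_eq_of_odd_of_forall_add_succ_eq {M : Type*} [AddCancelCommMonoid M] {d : ℕ → M}
    {c : M} {k : ℕ} (hk : Odd k) (hd : ∀ i < k, d i + d (i + 1) = c) : d 0 + d k = c := by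
  obtain ⟨j, rfl⟩ := hk
  induction j with
  | zero => exact hd 0 one_pos
  | succ j ih =>
    have hperiod : d (2 * j + 1) = d (2 * j + 3) := by
      apply add_right_cancel (b := d (2 * j + 2))
      rw [hd (2 * j + 1) (by lia), add_comm, hd (2 * j + 2) (by lia)]
    calc d 0 + d (2 * j + 3) = d 0 + d (2 * j + 1) := by rw [hperiod]
      _ = c := ih fun i hi ↦ hd i (by lia)

lemma eq_and_eq_of_abs_sub_le_one_of_add_eq_two_mul {x y m : ℤ} (hsub : |x - y| ≤ 1)
    (hadd : x + y = 2 * m) : x = m ∧ y = m := by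
  rw [abs_le] at hsub
  lia

lemma abs_increment_sub_increment_floor_le_one {R : Type*} [Ring R] [LinearOrder R]
    [IsStrictOrderedRing R] [FloorRing R] (x α : R) :
    |(⌊x + α⌋ - ⌊x⌋) - (⌊x⌋ - ⌊x - α⌋)| ≤ 1 := by
  have hsum : x + α + (x - α) = x + x := add_add_sub_cancel x x α
  have hle := Int.le_floor_add (x + α) (x - α)
  have hge := Int.le_floor_add_floor (x + α) (x - α)
  rw [hsum] at hle hge
  have hle' := Int.le_floor_add x x
  have hge' := Int.le_floor_add_floor x x
  rw [abs_le]
  lia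

lemma abs_increment_sub_increment_floor_mul_div_le_one (p p' b : ℤ) :
    |(⌊(((b + 1) * p : ℤ) : ℚ) / p'⌋ - ⌊((b * p : ℤ) : ℚ) / p'⌋) -
      (⌊((b * p : ℤ) : ℚ) / p'⌋ - ⌊(((b - 1) * p : ℤ) : ℚ) / p'⌋)| ≤ 1 := by
  have hnext : (((b + 1) * p : ℤ) : ℚ) / p' = ((b * p : ℤ) : ℚ) / p' + p / p' := by
    push_cast; ring
  have hprev : (((b - 1) * p : ℤ) : ℚ) / p' = ((b * p : ℤ) : ℚ) / p' - p / p' := by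
    push_cast; ring
  rw [hnext, hprev]
  exact abs_increment_sub_increment_floor_le_one _ _

theorem run_length_even_general {f : ℤ → ℤ}
    (hf : ∀ b, |(f (b + 1) - f b) - (f b - f (b - 1))| ≤ 1) {m c s : ℤ} {k : ℕ} (hc : c ≠ 2 * m)
    (hstart : f (s + 1) - f (s - 1) = 2 * m)
    (hrun : ∀ i : ℤ, 1 ≤ i → i ≤ k → f (s + i + 1) - f (s + i - 1) = c)
    (hend : f (s + k + 1 + 1) - f (s + k + 1 - 1) = 2 * m) :
    Even k := by
  by_contra hk
  let d (i : ℕ) : ℤ := f (s + i + 1) - f (s + i)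
  have hd_zero : d 0 = m := by
    simpa [d] using (eq_and_eq_of_abs_sub_le_one_of_add_eq_two_mul (hf s) (by lia)).1
  have hd_k : d k = m := by
    simpa [d] using (eq_and_eq_of_abs_sub_le_one_of_add_eq_two_mul (hf (s + k + 1)) (by lia)).2
  have hd_add_succ : ∀ i < k, d i + d (i + 1) = c := fun i hi ↦ by
    have := hrun (i + 1) (by lia) (by lia)
    simp only [d, Nat.cast_succ, ← add_assoc, add_sub_cancel_right] at this ⊢
    lia
  have hd_sum := add_eq_of_odd_of_forall_add_succ_eq (Nat.not_even_iff_odd.mp hk) hd_add_succ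
  lia

/-- if `p, p'` are relatively prime with `3 ≤ p < p' < 2p`, and integers
`s ≥ 1`, `k ≥ 0` satisfy `τ(s) = 2`, `τ(s+i) = 1` for `i = 1, …, k`, and `τ(s+k+1) = 2`,
then `k` is even. -/
theorem run_length_even (p p' : ℤ) (hcop : Int.gcd p p' = 1) (hp : 3 ≤ p) (h1 : p < p')
    (h2 : p' < 2 * p) (s k : ℤ) (hs : 1 ≤ s) (hk : 0 ≤ k)
    (hts : tau p p' s = 2)
    (hrun : ∀ i : ℤ, 1 ≤ i → i ≤ k → tau p p' (s + i) = 1)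
    (htk : tau p p' (s + k + 1) = 2) :
    2 ∣ k := by
  lift k to ℕ using hk
  exact mod_cast (run_length_even_general (f := fun b ↦ ⌊((b * p : ℤ) : ℚ) / p'⌋) (m := 1)
    (abs_increment_sub_increment_floor_mul_div_le_one p p') (by decide) hts hrun htk).two_dvd
end
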